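/- arXiv:1809.02527 — 3 statements merged into one kernel-verified Lean document; each statement's English description precedes it below -/
import Mathlib

section
/- (Lipschitz property of the acceptance function) For all real numbers x and y, | min(1, exp(x)) − min(1, exp(y)) | ≤ min(1, |x − y|). -/
/-- Lower bound for the acceptance function at `y` in terms of its value at `x`: with `d = |x - y|`
and `m t = min 1 (exp t)`, one has `m y ≥ m x * exp (-d) ≥ m x * (1 - d) ≥ m x - d`,
the last step because `m x ≤ 1`. -/
theorem min_one_exp_sub_le (x y : ℝ) :
    min 1 (Real.exp x) - min 1 (Real.exp y) ≤ |x - y| := by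
  have hd : 0 ≤ |x - y| := abs_nonneg _
  have hm0 : 0 ≤ min 1 (Real.exp x) := le_min zero_le_one (Real.exp_pos x).le
  have hm1 : min 1 (Real.exp x) ≤ 1 := min_le_left _ _
  have hlow : min 1 (Real.exp x) * Real.exp (-|x - y|) ≤ min 1 (Real.exp y) := by
    refine le_min (mul_le_one₀ hm1 (Real.exp_pos _).le (Real.exp_le_one_iff.2 (by linarith))) ?_
    calc min 1 (Real.exp x) * Real.exp (-|x - y|)
        ≤ Real.exp x * Real.exp (-|x - y|) :=
          mul_le_mul_of_nonneg_right (min_le_right _ _) (Real.exp_pos _).le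
      _ = Real.exp (x + -|x - y|) := (Real.exp_add _ _).symm
      _ ≤ Real.exp y := Real.exp_le_exp.2 (by linarith [le_abs_self (x - y)])
  have hexp : 1 - |x - y| ≤ Real.exp (-|x - y|) := by
    linarith [Real.add_one_le_exp (-|x - y|)]
  nlinarith [mul_le_mul_of_nonneg_left hexp hm0, mul_le_mul_of_nonneg_right hm1 hd]

/-- (Lipschitz property of the acceptance function)
For all real numbers `x` and `y`,
`|min 1 (exp x) − min 1 (exp y)| ≤ min 1 |x − y|`. -/
theorem stmt_11 (x y : ℝ) :
    |min 1 (Real.exp x) - min 1 (Real.exp y)| ≤ min 1 |x - y| := by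
  have hx0 : 0 ≤ min 1 (Real.exp x) := le_min zero_le_one (Real.exp_pos x).le
  have hy0 : 0 ≤ min 1 (Real.exp y) := le_min zero_le_one (Real.exp_pos y).le
  have hx1 : min 1 (Real.exp x) ≤ 1 := min_le_left _ _
  have hy1 : min 1 (Real.exp y) ≤ 1 := min_le_left _ _
  have hyx := min_one_exp_sub_le y x
  rw [abs_sub_comm] at hyx
  exact le_min (abs_le.2 ⟨by linarith, by linarith⟩)
    (abs_le.2 ⟨by linarith, min_one_exp_sub_le x y⟩)
end

section
/- (Lemma C.2, identity for the expected acceptance probability) Let Z be a real-valued random variable on a probability space with cumulative distribution function F. Then for any a ∈ ℝ, E[ min(1, exp(a + Z)) ] = 1 − ∫_{−∞}^0 F(u − a) · exp(u) du. -/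
open MeasureTheory

/-!
Pointwise, `1 - min 1 (exp c)` is the integral of `exp` over `{u ≤ 0 | c ≤ u}`. Taking
`c = a + Z ω` and averaging over `ω`, Fubini exchanges the two integrals, and the inner integral
of the indicator of `{Z ω ≤ u - a}` becomes `F (u - a)`.
-/

/-- The mass that `exp` puts on `[c, 0]` (empty when `c > 0`). -/
lemma setIntegral_indicator_exp (c : ℝ) :
    ∫ u in Set.Iic (0 : ℝ), (Set.Ici c).indicator Real.exp u = 1 - min 1 (Real.exp c) := by
  rw [setIntegral_indicator measurableSet_Ici]
  rcases le_total c 0 with h | h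
  · have hset : Set.Iic (0 : ℝ) ∩ Set.Ici c = Set.Icc c 0 := by
      ext u; simp [and_comm]
    rw [hset, integral_Icc_eq_integral_Ioc, ← intervalIntegral.integral_of_le h, integral_exp,
      Real.exp_zero, min_eq_right (Real.exp_le_one_iff.2 h)]
  · -- For `c ≥ 0` the domain is contained in the null set `{0}`.
    have hsub : Set.Iic (0 : ℝ) ∩ Set.Ici c ⊆ {0} := fun u hu =>
      le_antisymm hu.1 (h.trans hu.2)
    rw [setIntegral_measure_zero _ (measure_mono_null hsub (by simp)),
      min_eq_left (Real.one_le_exp h), sub_self]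

/-- (Lemma C.2, identity for the expected acceptance probability)
Let `Z` be a real-valued random variable on a probability space with cumulative
distribution function `F`.  Then for every `a ∈ ℝ`,
`E[min(1, exp (a + Z))] = 1 − ∫_{(−∞,0]} F (u − a) · exp u du`. -/
theorem stmt_13
    {Ω : Type*} [MeasurableSpace Ω] (μ : Measure Ω) [IsProbabilityMeasure μ]
    (Z : Ω → ℝ) (hZ : Measurable Z)
    (F : ℝ → ℝ) (hF : ∀ z, F z = (μ {ω | Z ω ≤ z}).toReal)
    (a : ℝ) :
    ∫ ω, min 1 (Real.exp (a + Z ω)) ∂μ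
      = 1 - ∫ u in Set.Iic (0 : ℝ), F (u - a) * Real.exp u := by
  have hint : Integrable (fun ω => min 1 (Real.exp (a + Z ω))) μ := by
    refine Integrable.of_bound (by fun_prop) 1 (ae_of_all _ fun ω => ?_)
    rw [Real.norm_of_nonneg (by positivity)]
    exact min_le_left _ _
  have hprod : Integrable
      (Function.uncurry fun (ω : Ω) (u : ℝ) => (Set.Ici (a + Z ω)).indicator Real.exp u)
      (μ.prod (volume.restrict (Set.Iic (0 : ℝ)))) := by
    have hexp : Integrable (fun p : Ω × ℝ => Real.exp p.2)
        (μ.prod (volume.restrict (Set.Iic (0 : ℝ)))) :=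
      Integrable.comp_snd (f := Real.exp) (integrableOn_exp_Iic 0) μ
    have hS : MeasurableSet {p : Ω × ℝ | a + Z p.1 ≤ p.2} :=
      measurableSet_le (by fun_prop) (by fun_prop)
    exact hexp.indicator hS
  have hinner : ∀ u : ℝ,
      ∫ ω, (Set.Ici (a + Z ω)).indicator Real.exp u ∂μ = F (u - a) * Real.exp u := by
    intro u
    have hfun : (fun ω => (Set.Ici (a + Z ω)).indicator Real.exp u)
        = {ω | Z ω ≤ u - a}.indicator fun _ => Real.exp u := by
      funext ω
      simp only [Set.indicator_apply, Set.mem_Ici, Set.mem_setOf_eq, le_sub_iff_add_le']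
    rw [hfun, integral_indicator_const _ (measurableSet_le hZ measurable_const), hF,
      measureReal_def, smul_eq_mul]
  have hswap := integral_integral_swap hprod
  simp only [setIntegral_indicator_exp, hinner] at hswap
  rw [integral_sub (integrable_const _) hint] at hswap
  simp only [integral_const, probReal_univ, smul_eq_mul, mul_one] at hswap
  linarith
end

section
/- (Unbiasedness of the annealed importance sampling estimator) Let (E, ℰ) be a measurable space and let γ_0, γ_1, …, γ_{K+1} be measurable nonnegative functions on E with 0 < Z_k := ∫ γ_k dλ < ∞ for a σ-finite reference measure λ, and set π_k := γ_k/Z_k, probability densities with respect to λ. Assume that for every k = 0,…,K and every measurable set A, π_{k+1}(A) > 0 implies π_k(A) > 0 (so each ratio γ_{k+1}/γ_k is π_k-a.e. well defined). Let R_1, …, R_K be Markov kernels on E such that R_k leaves the probability measure with density π_k invariant. Let (U_0, …, U_K) be the inhomogeneous Markov chain with U_0 distributed with density π_0 and U_k | U_{k−1} ~ R_k(U_{k−1}, ·) for k = 1,…,K. Then E[ ∏_{k=0}^K γ_{k+1}(U_k) / γ_k(U_k) ] = Z_{K+1} / Z_0; equivalently, E[ ∏_{k=0}^K π_{k+1}(U_k)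 / π_k(U_k) ] = 1. -/
/-!
Write `w k = π_{k+1} / π_k` for the incremental weights, as densities with values in `ℝ≥0∞`.
Absolute continuity says exactly that reweighting by `w k` turns `π_k` into `π_{k+1}`
(`withDensity_weight`): where `γ_k` vanishes, `γ_{k+1}` vanishes almost everywhere too.

By induction on `n`, the law of `U_n` under the chain reweighted by `w 0 (U_0) ⋯ w n (U_n)` is
`π_{n+1}` (`lintegral_chainLaw_weight`): the next transition `R_{n+1}` preserves `π_{n+1}`, and the
next weight carries it to `π_{n+2}`. Taking total mass at `n = K` gives the normalized identity; the
unnormalized one follows because the factors `Z_{k+1} / Z_k` telescope.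
-/

open MeasureTheory ProbabilityTheory

/-- The law of the inhomogeneous Markov chain `(U_0, …, U_n)` with initial
distribution `π0` and `U_k | U_{k−1} ~ R_k (U_{k−1}, ·)` for `1 ≤ k ≤ n`. -/
noncomputable def chainLaw {E : Type*} [MeasurableSpace E]
    (π0 : Measure E) (R : ℕ → Kernel E E) :
    (n : ℕ) → Measure (Fin (n + 1) → E)
  | 0 => π0.map (fun x => fun _ => x)
  | n + 1 => (chainLaw π0 R n).bind
      (fun u => ((R (n + 1)) (u (Fin.last n))).map (Fin.snoc u))

lemma measurable_snoc_prod {E : Type*} [MeasurableSpace E] (n : ℕ) :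
    Measurable (fun p : (Fin (n + 1) → E) × E =>
      (Fin.snoc p.1 p.2 : Fin (n + 1 + 1) → E)) := by
  refine measurable_pi_lambda _ fun i => ?_
  refine Fin.lastCases ?_ (fun j => ?_) i
  · simpa using measurable_snd
  · simpa [Function.comp_def] using (measurable_pi_apply j).comp measurable_fst

lemma measurable_snoc {E : Type*} [MeasurableSpace E] {n : ℕ} (u : Fin (n + 1) → E) :
    Measurable (Fin.snoc (α := fun _ => E) u) :=
  (measurable_snoc_prod n).comp measurable_prodMk_left

/-- One step of the chain, as a map from histories to laws of extended histories, is measurable.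
Without this, `Measure.bind` in `chainLaw` would be a junk value. -/
lemma measurable_chainStep {E : Type*} [MeasurableSpace E] (n : ℕ) (κ : Kernel E E)
    [IsMarkovKernel κ] :
    Measurable (fun u : Fin (n + 1) → E =>
      (κ (u (Fin.last n))).map (Fin.snoc (α := fun _ => E) u)) := by
  refine Measure.measurable_of_measurable_coe _ fun s hs => ?_
  have hmap : (fun u : Fin (n + 1) → E =>
      (κ (u (Fin.last n))).map (Fin.snoc (α := fun _ => E) u) s) =
      fun u => κ (u (Fin.last n)) (Fin.snoc (α := fun _ => E) u ⁻¹' s) :=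
    funext fun u => Measure.map_apply (measurable_snoc u) hs
  rw [hmap]
  exact Kernel.measurable_kernel_prodMk_left
    (κ := κ.comap (fun u : Fin (n + 1) → E => u (Fin.last n)) (measurable_pi_apply _))
    (measurable_snoc_prod n hs)

/-- If `w k` is a density of `π (k + 1)` with respect to `π k` and `R k` preserves `π k`, then
under the chain reweighted by `∏ k ≤ n, w k (U_k)` the last state `U_n` has law `π (n + 1)`. -/
lemma lintegral_chainLaw_weight {E : Type*} [MeasurableSpace E] (K : ℕ)
    (π : ℕ → Measure E) (w : ℕ → E → ENNReal)
    (hw : ∀ k ≤ K, Measurable (w k))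
    (hπ : ∀ k ≤ K, (π k).withDensity (w k) = π (k + 1))
    (R : ℕ → Kernel E E) (hR : ∀ k, 1 ≤ k → k ≤ K → IsMarkovKernel (R k))
    (hinv : ∀ k, 1 ≤ k → k ≤ K → (π k).bind (R k) = π k)
    (n : ℕ) (hn : n ≤ K) (f : E → ENNReal) (hf : Measurable f) :
    ∫⁻ u, (∏ k : Fin (n + 1), w k (u k)) * f (u (Fin.last n)) ∂(chainLaw (π 0) R n)
      = ∫⁻ x, f x ∂(π (n + 1)) := by
  have hmeas : ∀ m ≤ K, ∀ g : E → ENNReal, Measurable g →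
      Measurable (fun u : Fin (m + 1) → E =>
        (∏ k : Fin (m + 1), w k (u k)) * g (u (Fin.last m))) := by
    intro m hm g hg
    refine Measurable.mul (Finset.measurable_prod _ fun k _ => ?_)
      (hg.comp (measurable_pi_apply _))
    exact (hw k (by omega)).comp (measurable_pi_apply k)
  induction n generalizing f with
  | zero =>
    rw [chainLaw, lintegral_map (hmeas 0 hn f hf) (by fun_prop), ← hπ 0 hn,
      lintegral_withDensity_eq_lintegral_mul _ (hw 0 hn) hf]
    simp
  | succ n ih =>
    have := hR (n + 1) (by omega) hn
    have hwf : Measurable fun x => w (n + 1) x * f x := (hw (n + 1) hn).mul hf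
    rw [chainLaw, Measure.lintegral_bind (measurable_chainStep n (R (n + 1))).aemeasurable
      (hmeas (n + 1) hn f hf).aemeasurable]
    -- conditionally on the history, only the newest weight and `f` still have to be integrated
    have hstep : ∀ u : Fin (n + 1) → E,
        ∫⁻ v, (∏ k : Fin (n + 1 + 1), w k (v k)) * f (v (Fin.last (n + 1)))
          ∂((R (n + 1) (u (Fin.last n))).map (Fin.snoc (α := fun _ => E) u))
        = (∏ k : Fin (n + 1), w k (u k)) *
          ∫⁻ x, w (n + 1) x * f x ∂(R (n + 1) (u (Fin.last n))) := by
      intro u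
      rw [lintegral_map (hmeas (n + 1) hn f hf) (measurable_snoc u), ← lintegral_const_mul _ hwf]
      refine lintegral_congr fun x => ?_
      rw [Fin.prod_univ_castSucc]
      simp [mul_assoc]
    simp_rw [hstep]
    rw [ih (by omega) (fun y => ∫⁻ x, w (n + 1) x * f x ∂(R (n + 1) y))
      hwf.lintegral_kernel,
      ← Measure.lintegral_bind (R (n + 1)).aemeasurable hwf.aemeasurable,
      hinv (n + 1) (by omega) hn, ← hπ (n + 1) hn,
      lintegral_withDensity_eq_lintegral_mul _ (hw (n + 1) hn) hf]
    rfl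

/-- If `p ≥ 0` and the measure with density `q⁺` is absolutely continuous with respect to the
one with density `p`, then the positive part of the real quotient `q / p` is a density of the former
with respect to the latter. The junk value `q x / 0 = 0` is harmless, since `q ≤ 0` almost
everywhere on `{p = 0}`. -/
lemma withDensity_weight {E : Type*} [MeasurableSpace E] (lam : Measure E)
    (p q : E → ℝ) (hp : Measurable p) (hq : Measurable q)
    (hp0 : ∀ x, 0 ≤ p x)
    (habs : ∀ A : Set E, MeasurableSet A →
      0 < lam.withDensity (fun x => ENNReal.ofReal (q x)) A →
      0 < lam.withDensity (fun x => ENNReal.ofReal (p x)) A) :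
    (lam.withDensity (fun x => ENNReal.ofReal (p x))).withDensity
        (fun x => ENNReal.ofReal (q x / p x))
      = lam.withDensity (fun x => ENNReal.ofReal (q x)) := by
  have hqp : Measurable fun x => ENNReal.ofReal (q x / p x) := (hq.div hp).ennreal_ofReal
  rw [← withDensity_mul _ hp.ennreal_ofReal hqp]
  refine withDensity_congr_ae ?_
  have hA : MeasurableSet {x | p x = 0} := hp (measurableSet_singleton 0)
  have hpA : lam.withDensity (fun x => ENNReal.ofReal (p x)) {x | p x = 0} = 0 := by
    rw [withDensity_apply _ hA, setLIntegral_congr_fun (g := fun _ => 0) hA]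
    · simp
    · intro x hx
      simp [show p x = 0 from hx]
  have hqA : lam.withDensity (fun x => ENNReal.ofReal (q x)) {x | p x = 0} = 0 := by
    by_contra h
    exact (habs _ hA (pos_iff_ne_zero.mpr h)).ne' hpA
  rw [withDensity_apply _ hA, lintegral_eq_zero_iff hq.ennreal_ofReal] at hqA
  have hqA' := (ae_restrict_iff' hA).mp hqA
  filter_upwards [hqA'] with x hx
  by_cases h : p x = 0
  · have h1 := hx h
    simp only [Pi.zero_apply] at h1
    simp [h, h1]
  · rw [Pi.mul_apply, ← ENNReal.ofReal_mul (hp0 x), mul_div_cancel₀ _ h]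

/-- (Unbiasedness of the annealed importance sampling estimator)
Let `γ_0, …, γ_{K+1}` be measurable nonnegative functions on `E` with
`0 < Z_k := ∫ γ_k dλ < ∞` for a σ-finite measure `λ`, and `π_k := γ_k / Z_k`.
Assume `π_{k+1} ≪ π_k` in the sense that `π_{k+1}(A) > 0 ⟹ π_k(A) > 0`, and let
`R_1, …, R_K` be Markov kernels with `R_k` leaving `π_k` invariant.  If
`(U_0, …, U_K)` is the chain started from `π_0` with transitions `R_k`, then
`E[∏_{k=0}^K γ_{k+1}(U_k)/γ_k(U_k)] = Z_{K+1}/Z_0`, equivalently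
`E[∏_{k=0}^K π_{k+1}(U_k)/π_k(U_k)] = 1`. -/
theorem stmt_18
    {E : Type*} [MeasurableSpace E]
    (lam : Measure E) [SigmaFinite lam]
    (K : ℕ) (γ : ℕ → E → ℝ)
    (hγmeas : ∀ k ≤ K + 1, Measurable (γ k))
    (hγnonneg : ∀ k ≤ K + 1, ∀ x, 0 ≤ γ k x)
    (hγint : ∀ k ≤ K + 1, Integrable (γ k) lam)
    (Z : ℕ → ℝ) (hZ : ∀ k ≤ K + 1, Z k = ∫ x, γ k x ∂lam)
    (hZpos : ∀ k ≤ K + 1, 0 < Z k)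
    (πm : ℕ → Measure E)
    (hπm : ∀ k ≤ K + 1, πm k = lam.withDensity (fun x => ENNReal.ofReal (γ k x / Z k)))
    (habs : ∀ k ≤ K, ∀ A : Set E, MeasurableSet A → 0 < πm (k + 1) A → 0 < πm k A)
    (R : ℕ → Kernel E E) (hR : ∀ k, 1 ≤ k → k ≤ K → IsMarkovKernel (R k))
    (hinv : ∀ k, 1 ≤ k → k ≤ K → (πm k).bind (R k) = πm k) :
    (∫ u, ∏ k : Fin (K + 1), γ ((k : ℕ) + 1) (u k) / γ (k : ℕ) (u k)
        ∂(chainLaw (πm 0) R K)) = Z (K + 1) / Z 0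
    ∧ (∫ u, ∏ k : Fin (K + 1),
          (γ ((k : ℕ) + 1) (u k) / Z ((k : ℕ) + 1)) / (γ (k : ℕ) (u k) / Z (k : ℕ))
        ∂(chainLaw (πm 0) R K)) = 1 := by
  have hnorm : (∫ u, ∏ k : Fin (K + 1),
          (γ ((k : ℕ) + 1) (u k) / Z ((k : ℕ) + 1)) / (γ (k : ℕ) (u k) / Z (k : ℕ))
        ∂(chainLaw (πm 0) R K)) = 1 := by
    have hp : ∀ k ≤ K + 1, Measurable fun x => γ k x / Z k := fun k hk =>
      (hγmeas k hk).div_const _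
    have hp0 : ∀ k ≤ K + 1, ∀ x, 0 ≤ γ k x / Z k := fun k hk x =>
      div_nonneg (hγnonneg k hk x) (hZpos k hk).le
    have hmass : πm (K + 1) Set.univ = 1 := by
      rw [hπm _ le_rfl, withDensity_apply _ MeasurableSet.univ, setLIntegral_univ,
        ← ofReal_integral_eq_lintegral_ofReal ((hγint _ le_rfl).div_const _)
          (Filter.Eventually.of_forall (hp0 _ le_rfl)),
        integral_div, ← hZ _ le_rfl, div_self (hZpos _ le_rfl).ne', ENNReal.ofReal_one]
    have key := lintegral_chainLaw_weight K πm
      (fun k x => ENNReal.ofReal ((γ (k + 1) x / Z (k + 1)) / (γ k x / Z k)))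
      (fun k hk => ((hp (k + 1) (by omega)).div (hp k (by omega))).ennreal_ofReal)
      (fun k hk => by
        have h := habs k hk
        rw [hπm k (by omega), hπm (k + 1) (by omega)] at h ⊢
        exact withDensity_weight lam _ _ (hp k (by omega)) (hp (k + 1) (by omega))
          (hp0 k (by omega)) h)
      R hR hinv K le_rfl (fun _ => 1) measurable_const
    have hw0 : ∀ (k : Fin (K + 1)) (x : E),
        0 ≤ (γ ((k : ℕ) + 1) x / Z ((k : ℕ) + 1)) / (γ (k : ℕ) x / Z (k : ℕ)) := fun k x =>
      div_nonneg (hp0 _ (by omega) x) (hp0 _ (by omega) x)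
    have hwm : Measurable fun u : Fin (K + 1) → E => ∏ k : Fin (K + 1),
        (γ ((k : ℕ) + 1) (u k) / Z ((k : ℕ) + 1)) / (γ (k : ℕ) (u k) / Z (k : ℕ)) :=
      Finset.measurable_prod _ fun k _ =>
        ((hp (k + 1) (by omega)).div (hp k (by omega))).comp (measurable_pi_apply k)
    rw [integral_eq_lintegral_of_nonneg_ae
      (Filter.Eventually.of_forall fun u => Finset.prod_nonneg fun k _ => hw0 k (u k))
      hwm.aestronglyMeasurable]
    simp_rw [fun u : Fin (K + 1) → E =>
      ENNReal.ofReal_prod_of_nonneg (s := Finset.univ) fun k _ => hw0 k (u k)]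
    simp only [mul_one, lintegral_const, hmass] at key
    rw [key, ENNReal.toReal_one]
  refine ⟨?_, hnorm⟩
  have htel : ∀ n ≤ K, ∏ k : Fin (n + 1), Z ((k : ℕ) + 1) / Z (k : ℕ) = Z (n + 1) / Z 0 := by
    intro n hn
    induction n with
    | zero => simp
    | succ n ih =>
      have h := (hZpos (n + 1) (by omega)).ne'
      rw [Fin.prod_univ_castSucc]
      simp only [Fin.val_castSucc, Fin.val_last]
      rw [ih (by omega), mul_comm, div_mul_div_cancel₀ h]
  have hfac : ∀ u : Fin (K + 1) → E,
      ∏ k : Fin (K + 1), γ ((k : ℕ) + 1) (u k) / γ (k : ℕ) (u k)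
        = Z (K + 1) / Z 0 * ∏ k : Fin (K + 1),
          (γ ((k : ℕ) + 1) (u k) / Z ((k : ℕ) + 1)) / (γ (k : ℕ) (u k) / Z (k : ℕ)) := by
    intro u
    rw [← htel K le_rfl, ← Finset.prod_mul_distrib]
    refine Finset.prod_congr rfl fun k _ => ?_
    have h1 := (hZpos (k : ℕ) (by omega)).ne'
    have h2 := (hZpos ((k : ℕ) + 1) (by omega)).ne'
    field_simp
  simp_rw [hfac]
  rw [integral_const_mul, hnorm, mul_one]
end
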